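/- Let X be an ultrametric space, let 𝓑 be an FD family such that X has the 𝓑-extremality property, and let Z ⊆ X be a finite set intersecting every element of 𝓑. Then there exists an FD family 𝓑' such that (1) 𝓑' strengthens 𝓑, (2) X has the 𝓑'-extremality property, and (3) every g ∈ Iso(X) permuting Z also permutes 𝓑'. -/

import Mathlib

/-!
The extremality property is preserved by unions: if `X` has it for two finite sets of balls `𝓑` and
`𝓒`, then it has it for `𝓑 ∪ 𝓒` (`extremalityProperty_union`). The theorem follows. The translates
`h[B]`, `B ∈ 𝓑`, by isometries `h` permuting `Z` form a finite set, because `h[B]` is a ball with the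
radius of `B` around a point of `Z`. This set is invariant under the isometries permuting `Z`, and it
is a finite union of families `h[𝓑]`, for each of which `X` has the extremality property. Its minimal
members are pairwise disjoint and have the same stabilizer, since an isometry fixing a ball fixes
every larger ball.

The union lemma rests on a swap (`exists_swap`): if `dist x (g x) = d`, some isometry exchanges the
balls of radius `d` around `x` and `g x` and fixes every ball contained in neither of them. Suppose
that the orbit of `ball x r` under `τ(Id, 𝓑 ∪ 𝓒)` is finite but not a singleton, and let `d` be the
largest distance from `x` to a ball of the orbit. If `τ(Id, 𝓑)` moves `x` by at most `d`, then
`ball x d` has an infinite orbit under `τ(Id, 𝓑)` consisting of balls at distance `d` from each other,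
and all those containing no member of `𝓒` are reached by swaps in `τ(Id, 𝓑 ∪ 𝓒)`, a contradiction
(`exists_far`). The same holds for `𝓒`. Otherwise each of the two stabilizers moves `x` by more than
`d`. Then (`exists_moved_ball_containing`) some ball around `x` moved by `τ(Id, 𝓑)` contains a member
of `𝓒`, and some ball around `x` moved by `τ(Id, 𝓒)` contains a member of `𝓑`. The larger of these
two nested balls is both moved and fixed by the same stabilizer.
-/

open Metric Set Topology

namespace UltraGen

variable {X : Type*} [MetricSpace X]

/-- `B` is a ball of radius `r` (i.e. `B = ball x r` for some center, with `r > 0`). -/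
def IsBallRad (B : Set X) (r : ℝ) : Prop := 0 < r ∧ ∃ x : X, B = Metric.ball x r

/-- `B` is a ball in `X`. -/
def IsBall (B : Set X) : Prop := ∃ r, IsBallRad B r

/-- An FD family: a finite family of pairwise disjoint balls. -/
def FDFamily (𝓑 : Set (Set X)) : Prop :=
  𝓑.Finite ∧ (∀ B ∈ 𝓑, IsBall B) ∧ 𝓑.Pairwise fun B B' => Disjoint B B'

/-- τ(g,𝓑) = {g' ∈ Iso(X) : g'[B] = g[B] for all B ∈ 𝓑}. -/
def tau (g : X ≃ᵢ X) (𝓑 : Set (Set X)) : Set (X ≃ᵢ X) :=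
  {g' | ∀ B ∈ 𝓑, g' '' B = g '' B}

/-- 𝓑' strengthens 𝓑 iff τ(Id,𝓑') ⊆ τ(Id,𝓑). -/
def Strengthens (𝓑' 𝓑 : Set (Set X)) : Prop :=
  tau (1 : X ≃ᵢ X) 𝓑' ⊆ tau (1 : X ≃ᵢ X) 𝓑

/-- 𝒪^𝓑(C) = {g[C] : g ∈ τ(Id,𝓑)}. -/
def orb (𝓑 : Set (Set X)) (C : Set X) : Set (Set X) :=
  (fun g : X ≃ᵢ X => g '' C) '' tau (1 : X ≃ᵢ X) 𝓑

/-- A ball `C` is 𝓑-extremal in `X` if 𝒪^𝓑(C) is infinite or a singleton. -/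
def Extremal (𝓑 : Set (Set X)) (C : Set X) : Prop :=
  (orb 𝓑 C).Infinite ∨ ∃ D, orb 𝓑 C = {D}

/-- `X` has the 𝓑-extremality property if every ball in `X` is 𝓑-extremal in `X`. -/
def ExtremalityProperty (X : Type*) [MetricSpace X] (𝓑 : Set (Set X)) : Prop :=
  ∀ C : Set X, IsBall C → Extremal 𝓑 C

/-- `C` is a ball of radius `r` which is r-maximal 𝓑-non-extremal in `X`:
`C` is 𝓑-non-extremal and every ball of radius `r' > r` containing `C` is 𝓑-extremal. -/
def RMaxNonExtremalRad (𝓑 : Set (Set X)) (C : Set X) (r : ℝ) : Prop :=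
  IsBallRad C r ∧ ¬ Extremal 𝓑 C ∧
  ∀ (C' : Set X) (r' : ℝ), r < r' → IsBallRad C' r' → C ⊆ C' → Extremal 𝓑 C'

/-- `C` is r-maximal 𝓑-non-extremal in `X` (for some radius of `C`). -/
def RMaxNonExtremal (𝓑 : Set (Set X)) (C : Set X) : Prop :=
  ∃ r, RMaxNonExtremalRad 𝓑 C r

/-- Distance between two subsets of `X`. -/
noncomputable def setDist (A B : Set X) : ℝ :=
  sInf ((fun p : X × X => dist p.1 p.2) '' A ×ˢ B)

/-- Two subsets are similar if some isometry of `X` maps one onto the other. -/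
def Similar (A B : Set X) : Prop := ∃ g : X ≃ᵢ X, g '' A = B

/-- `[B]` for a ball `B` of radius `r`: `B` together with all balls `B'` of radius `r`
similar to `B` with `dist(B,B') = r`. -/
def ballClass (B : Set X) (r : ℝ) : Set (Set X) :=
  insert B {B' | (∃ x : X, B' = Metric.ball x r) ∧ Similar B B' ∧ setDist B B' = r}

/-- `g` permutes a finite set `Z`. -/
def PermutesSet (g : X ≃ᵢ X) (Z : Set X) : Prop := g '' Z = Z

/-- `g` permutes an FD family 𝓑. -/
def PermutesFam (g : X ≃ᵢ X) (𝓑 : Set (Set X)) : Prop :=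
  (fun B => g '' B) '' 𝓑 = 𝓑

/-- The topology of pointwise convergence on the isometry group of `X`. -/
instance isoTopology (X : Type*) [PseudoEMetricSpace X] : TopologicalSpace (X ≃ᵢ X) :=
  TopologicalSpace.induced (fun g => (g : X → X)) Pi.topologicalSpace

/-- A topological group has ample generics if each diagonal conjugation action
on `G^(n+1)` has a comeager orbit. -/
def HasAmpleGenerics (G : Type*) [Group G] [TopologicalSpace G] : Prop :=
  ∀ n : ℕ, ∃ v : Fin (n + 1) → G,
    {w : Fin (n + 1) → G | ∃ g : G, ∀ i, w i = g * v i * g⁻¹} ∈ residual (Fin (n + 1) → G)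

end UltraGen

namespace UltraGen

/-! ### Balls and stabilizers -/

lemma mem_tau_one {X : Type*} [MetricSpace X] {𝓑 : Set (Set X)} {g : X ≃ᵢ X} :
    g ∈ tau (1 : X ≃ᵢ X) 𝓑 ↔ ∀ B ∈ 𝓑, g '' B = B := by
  simp [tau]

lemma one_mem_tau {X : Type*} [MetricSpace X] {𝓑 : Set (Set X)} :
    (1 : X ≃ᵢ X) ∈ tau (1 : X ≃ᵢ X) 𝓑 := fun _ _ => rfl

lemma mem_tau_union {X : Type*} [MetricSpace X] {𝓑 𝓒 : Set (Set X)} {g : X ≃ᵢ X} :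
    g ∈ tau (1 : X ≃ᵢ X) (𝓑 ∪ 𝓒) ↔ g ∈ tau (1 : X ≃ᵢ X) 𝓑 ∧ g ∈ tau (1 : X ≃ᵢ X) 𝓒 := by
  simp only [mem_tau_one, Set.mem_union, or_imp, forall_and]

lemma extremal_iff {X : Type*} [MetricSpace X] {𝓑 : Set (Set X)} {C : Set X} :
    Extremal 𝓑 C ↔ (orb 𝓑 C).Infinite ∨ ∀ g ∈ tau (1 : X ≃ᵢ X) 𝓑, g '' C = C := by
  have h1 : C ∈ orb 𝓑 C := ⟨1, one_mem_tau, by simp⟩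
  refine or_congr Iff.rfl ⟨?_, ?_⟩
  · rintro ⟨D, hD⟩ g hg
    have h2 : g '' C ∈ orb 𝓑 C := ⟨g, hg, rfl⟩
    rw [hD, Set.mem_singleton_iff] at h1 h2
    rw [h2, ← h1]
  · intro h
    refine ⟨C, Set.Subset.antisymm ?_ (by simpa using h1)⟩
    rintro _ ⟨g, hg, rfl⟩
    exact h g hg

lemma IsBall.nonempty {X : Type*} [MetricSpace X] {B : Set X} (h : IsBall B) : B.Nonempty := by
  obtain ⟨r, hr, x, rfl⟩ := h
  exact ⟨x, Metric.mem_ball_self hr⟩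

lemma IsBall.image {X : Type*} [MetricSpace X] {B : Set X} (h : IsBall B) (g : X ≃ᵢ X) :
    IsBall (g '' B) := by
  obtain ⟨r, hr, x, rfl⟩ := h
  exact ⟨r, hr, g x, g.image_ball x r⟩

lemma isBall_ball {X : Type*} [MetricSpace X] (x : X) {r : ℝ} (hr : 0 < r) :
    IsBall (Metric.ball x r) := ⟨r, hr, x, rfl⟩

/-- The extremality property transfers to translated families, by conjugation. -/
lemma extremalityProperty_image {X : Type*} [MetricSpace X] {𝓑 : Set (Set X)}
    (hext : ExtremalityProperty X 𝓑) (h : X ≃ᵢ X) : ExtremalityProperty X ((fun B => h '' B) '' 𝓑) := by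
  intro C hC
  have hconj : ∀ g ∈ tau (1 : X ≃ᵢ X) 𝓑,
      h * g * h⁻¹ ∈ tau (1 : X ≃ᵢ X) ((fun B => h '' B) '' 𝓑) := by
    intro g hg
    rw [mem_tau_one] at hg ⊢
    rintro _ ⟨B, hB, rfl⟩
    rw [← Set.image_comp]
    have : (⇑(h * g * h⁻¹) ∘ ⇑h : X → X) = h ∘ g := by
      funext y
      simp
    rw [this, Set.image_comp, hg B hB]
  have hconj' : ∀ g ∈ tau (1 : X ≃ᵢ X) ((fun B => h '' B) '' 𝓑),
      h⁻¹ * g * h ∈ tau (1 : X ≃ᵢ X) 𝓑 := by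
    intro g hg
    rw [mem_tau_one] at hg ⊢
    intro B hB
    have h1 := hg _ ⟨B, hB, rfl⟩
    have : (⇑(h⁻¹ * g * h) : X → X) = ⇑h⁻¹ ∘ g ∘ h := rfl
    rw [this, Set.image_comp, Set.image_comp, h1, ← Set.image_comp]
    have : (⇑h⁻¹ ∘ ⇑h : X → X) = id := by
      funext y
      simp
    rw [this, Set.image_id]
  rw [extremal_iff]
  rcases extremal_iff.1 (hext _ (hC.image h⁻¹)) with hinf | hsing
  · left
    have himg := hinf.image (f := fun S : Set X => h '' S)
      ((Set.image_injective.2 h.injective).injOn)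
    refine himg.mono ?_
    rintro _ ⟨_, ⟨g, hg, rfl⟩, rfl⟩
    refine ⟨_, hconj g hg, ?_⟩
    simp only [← Set.image_comp]
    rfl
  · right
    intro g hg
    have h1 := hsing _ (hconj' g hg)
    rw [← Set.image_comp] at h1
    have : (⇑(h⁻¹ * g * h) ∘ ⇑h⁻¹ : X → X) = ⇑h⁻¹ ∘ g := by
      funext y
      simp
    rw [this, Set.image_comp] at h1
    exact Set.image_injective.2 (h⁻¹).injective h1

variable {X : Type*} [MetricSpace X] [IsUltrametricDist X]

lemma ball_eq_iff {x y : X} {r : ℝ} (hr : 0 < r) :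
    Metric.ball y r = Metric.ball x r ↔ dist x y < r := by
  constructor
  · intro h
    have : x ∈ Metric.ball y r := h ▸ Metric.mem_ball_self hr
    exact this
  · intro h
    exact IsUltrametricDist.ball_eq_of_mem h

lemma dist_eq_of_near {x p q : X} {r : ℝ} (h1 : dist p q < r) (h2 : r ≤ dist x q) :
    dist x p = dist x q := by
  have h3 := dist_triangle_max x p q
  have h4 := dist_triangle_max x q p
  rw [dist_comm q p] at h4
  rcases le_max_iff.1 h3 with h | h <;> rcases le_max_iff.1 h4 with h' | h' <;> linarith

/-- A ball moved by `g` contains no set fixed by `g`. -/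
lemma not_subset_of_moved {g : X ≃ᵢ X} {x : X} {r : ℝ} {B : Set X} (hB : B.Nonempty)
    (hg : g '' B = B) (hr : r ≤ dist x (g x)) : ¬ B ⊆ Metric.ball x r := by
  intro hs
  obtain ⟨b, hb⟩ := hB
  have hgb : g b ∈ B := hg ▸ Set.mem_image_of_mem g hb
  have h1 : dist b x < r := hs hb
  have h2 : dist (g b) x < r := hs hgb
  have h3 : dist (g b) (g x) < r := by rwa [g.dist_eq]
  have := dist_triangle_max x (g b) (g x)
  rw [dist_comm x (g b)] at this
  exact absurd (this.trans_lt (max_lt h2 h3)) (not_lt.2 hr)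

lemma not_subset_of_moved_image {g : X ≃ᵢ X} {x : X} {r : ℝ} {B : Set X} (hB : B.Nonempty)
    (hg : g '' B = B) (hr : r ≤ dist x (g x)) : ¬ B ⊆ Metric.ball (g x) r := by
  intro hs
  refine not_subset_of_moved hB hg hr fun b hb => ?_
  have hgb : g b ∈ B := hg ▸ Set.mem_image_of_mem g hb
  have : dist (g b) (g x) < r := hs hgb
  rwa [g.dist_eq] at this

/-- If an isometry fixes a nonempty subset of a ball, it fixes the ball. -/
lemma image_eq_of_subset {g : X ≃ᵢ X} {B C : Set X} (hB : B.Nonempty) (hg : g '' B = B)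
    (hC : IsBall C) (hBC : B ⊆ C) : g '' C = C := by
  obtain ⟨r, hr, x, rfl⟩ := hC
  rw [g.image_ball, ball_eq_iff hr]
  by_contra h
  exact not_subset_of_moved hB hg (not_lt.1 h) hBC

lemma subset_or_disjoint {B C : Set X} (hB : IsBall B) (hC : IsBall C) :
    B ⊆ C ∨ C ⊆ B ∨ Disjoint B C := by
  obtain ⟨r, hr, x, rfl⟩ := hB
  obtain ⟨s, hs, y, rfl⟩ := hC
  exact IsUltrametricDist.ball_subset_trichotomy x y r s

/-! ### The swap -/

/-- The isometry is `g` on the ball of radius `dist x (g x)` around `x`, `g⁻¹` on the one around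
`g x`, and the identity elsewhere. -/
lemma exists_swap (g : X ≃ᵢ X) (x : X) (hd : 0 < dist x (g x)) :
    ∃ s : X ≃ᵢ X, s x = g x ∧ ∀ B : Set X, IsBall B → ¬ B ⊆ Metric.ball x (dist x (g x)) →
      ¬ B ⊆ Metric.ball (g x) (dist x (g x)) → s '' B = B := by
  classical
  set d := dist x (g x) with hdd
  set f : X → X := fun y => if dist y x < d then g y else
    if dist y (g x) < d then g.symm y else y with hf
  have far : ∀ y, dist y x < d → ¬ dist y (g x) < d := by
    intro y h1 h2
    have := dist_triangle_max x y (g x)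
    rw [dist_comm x y] at this
    exact absurd (this.trans_lt (max_lt h1 h2)) (lt_irrefl _)
  have near : ∀ y, dist (g y) (g x) < d ↔ dist y x < d := fun y => by rw [g.dist_eq]
  have near' : ∀ y, dist (g.symm y) x < d ↔ dist y (g x) < d := fun y => by
    rw [← near, g.apply_symm_apply]
  have f1 : ∀ y, dist y x < d → f y = g y := fun y h => by simp [hf, h]
  have f2 : ∀ y, dist y (g x) < d → f y = g.symm y := fun y h => by
    have : ¬ dist y x < d := fun h' => far y h' h
    simp only [hf]
    rw [if_neg this, if_pos h]
  have f3 : ∀ y, ¬ dist y x < d → ¬ dist y (g x) < d → f y = y := fun y h h' => by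
    simp only [hf]
    rw [if_neg h, if_neg h']
  have invol : ∀ y, f (f y) = y := by
    intro y
    by_cases h : dist y x < d
    · rw [f1 y h, f2 _ ((near y).2 h), g.symm_apply_apply]
    by_cases h' : dist y (g x) < d
    · rw [f2 y h', f1 _ ((near' y).2 h'), g.apply_symm_apply]
    · rw [f3 y h h', f3 y h h']
  have move : ∀ y, dist y (f y) ≤ d := by
    have key : ∀ a b : X, dist a x < d → dist b (g x) < d → dist a b ≤ d := by
      intro a b h1 h2
      have h3 := dist_triangle_max a x b
      have h4 := dist_triangle_max x (g x) b
      rw [dist_comm b] at h2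
      exact h3.trans (max_le h1.le (h4.trans (max_le hdd.ge h2.le)))
    intro y
    by_cases h : dist y x < d
    · rw [f1 y h]; exact key _ _ h ((near y).2 h)
    by_cases h' : dist y (g x) < d
    · rw [f2 y h', dist_comm]; exact key _ _ ((near' y).2 h') h'
    · rw [f3 y h h', dist_self]; exact hd.le
  -- Points in different pieces are at distance at least `d`.
  have le_dist : ∀ c y z : X, dist y c < d → ¬ dist z c < d → d ≤ dist y z := by
    intro c y z h1 h2
    by_contra h3
    have h4 := dist_triangle_max z y c
    rw [dist_comm z y] at h4
    exact h2 (h4.trans_lt (max_lt (not_le.1 h3) h1))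
  have contr : ∀ y z, dist (f y) (f z) ≤ dist y z := by
    intro y z
    have gen : d ≤ dist y z → dist (f y) (f z) ≤ dist y z := by
      intro h
      have h1 := dist_triangle_max (f y) y (f z)
      have h2 := dist_triangle_max y z (f z)
      rw [dist_comm (f y) y] at h1
      exact h1.trans (max_le ((move y).trans h) (h2.trans (max_le le_rfl ((move z).trans h))))
    by_cases hy : dist y x < d
    · by_cases hz : dist z x < d
      · rw [f1 y hy, f1 z hz, g.dist_eq]
      · exact gen (le_dist x y z hy hz)
    by_cases hz : dist z x < d
    · exact gen (by rw [dist_comm]; exact le_dist x z y hz hy)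
    by_cases hy' : dist y (g x) < d
    · by_cases hz' : dist z (g x) < d
      · rw [f2 y hy', f2 z hz', g.symm.dist_eq]
      · exact gen (le_dist _ y z hy' hz')
    by_cases hz' : dist z (g x) < d
    · exact gen (by rw [dist_comm]; exact le_dist _ z y hz' hy')
    rw [f3 y hy hy', f3 z hz hz']
  have isom : Isometry f := Isometry.of_dist_eq fun y z => by
    refine le_antisymm (contr y z) ?_
    have := contr (f y) (f z)
    rwa [invol, invol] at this
  refine ⟨⟨⟨f, f, invol, invol⟩, isom⟩, f1 x (by simpa using hd), ?_⟩
  rintro B ⟨r, hr, b, rfl⟩ hB1 hB2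
  set s : X ≃ᵢ X := ⟨⟨f, f, invol, invol⟩, isom⟩
  have hs : s b = f b := rfl
  rw [s.image_ball, hs, ball_eq_iff hr]
  have small : ∀ c, dist b c < d → ¬ Metric.ball b r ⊆ Metric.ball c d → dist b (f b) < r := by
    intro c hc hnot
    refine (move b).trans_lt (not_le.1 fun hle => hnot ?_)
    rw [IsUltrametricDist.ball_eq_of_mem (x := c) (y := b) hc]
    exact Metric.ball_subset_ball hle
  by_cases h : dist b x < d
  · exact small x h hB1
  by_cases h' : dist b (g x) < d
  · exact small _ h' hB2
  · rw [f3 b h h', dist_self]; exact hr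

/-! ### Unions preserve extremality -/

lemma exists_pick (X : Type*) [Nonempty X] : ∃ p : Set X → X, ∀ S : Set X, S.Nonempty → p S ∈ S := by
  classical
  exact ⟨fun S => if h : S.Nonempty then h.some else Classical.arbitrary X,
    fun S h => by simp only [dif_pos h]; exact h.some_mem⟩

/-- A ball moved by the stabilizer of `𝓑` but not by that of `𝓑 ∪ 𝓒` can be enlarged, still being
moved by the stabilizer of `𝓑`, so as to contain a member of `𝓒`. -/
lemma exists_moved_ball_containing {𝓑 𝓒 : Set (Set X)} (hb : ∀ B ∈ 𝓑, IsBall B)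
    (hc : ∀ C ∈ 𝓒, IsBall C) (hfin : 𝓒.Finite) (hext : ExtremalityProperty X 𝓑)
    {x : X} {ρ : ℝ} (hρ : 0 < ρ)
    (hfix : ∀ g ∈ tau (1 : X ≃ᵢ X) (𝓑 ∪ 𝓒), dist x (g x) < ρ)
    (hmov : ∃ g ∈ tau (1 : X ≃ᵢ X) 𝓑, ρ ≤ dist x (g x)) :
    ∃ g ∈ tau (1 : X ≃ᵢ X) 𝓑, ∃ C ∈ 𝓒, C ⊆ Metric.ball x (dist x (g x)) := by
  by_contra! hcon
  have : Nonempty X := ⟨x⟩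
  obtain ⟨p, hp⟩ := exists_pick X
  -- The swap along `g` would lie in the stabilizer of `𝓑 ∪ 𝓒` if no member of `𝓒` prevented it.
  have hC : ∀ g ∈ tau (1 : X ≃ᵢ X) 𝓑, ρ ≤ dist x (g x) →
      ∃ C ∈ 𝓒, C ⊆ Metric.ball (g x) (dist x (g x)) := by
    intro g hg hd
    by_contra! hno
    obtain ⟨s, hsx, hs⟩ := exists_swap g x (hρ.trans_le hd)
    have hmem : s ∈ tau (1 : X ≃ᵢ X) (𝓑 ∪ 𝓒) := by
      rw [mem_tau_one]
      rintro B (hB | hB)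
      · have hgB := mem_tau_one.1 hg B hB
        exact hs B (hb B hB) (not_subset_of_moved (hb B hB).nonempty hgB le_rfl)
          (not_subset_of_moved_image (hb B hB).nonempty hgB le_rfl)
      · exact hs B (hc B hB) (hcon g hg B hB) (hno B hB)
    have := hfix s hmem
    rw [hsx] at this
    exact absurd this (not_lt.2 hd)
  set D : Set ℝ := {e | ∃ g ∈ tau (1 : X ≃ᵢ X) 𝓑, ρ ≤ dist x (g x) ∧ dist x (g x) = e} with hD
  have hDfin : D.Finite := by
    refine (hfin.image fun C => dist x (p C)).subset ?_
    rintro e ⟨g, hg, hd, rfl⟩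
    obtain ⟨C, hC1, hC2⟩ := hC g hg hd
    exact ⟨C, hC1, dist_eq_of_near (hC2 (hp C (hc C hC1).nonempty)) le_rfl⟩
  have hDne : D.Nonempty := by
    obtain ⟨g, hg, hd⟩ := hmov
    exact ⟨_, g, hg, hd, rfl⟩
  obtain ⟨e, ⟨g, hg, hd, hge⟩, hmax⟩ := Set.exists_max_image D id hDfin hDne
  have he : 0 < e := by linarith
  rcases extremal_iff.1 (hext (Metric.ball x e) (isBall_ball x he)) with hinf | hsing
  · -- By maximality of `e`, every other ball of the orbit is determined by a member of `𝓒`.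
    refine hinf (((hfin.image fun C => Metric.ball (p C) e).insert (Metric.ball x e)).subset ?_)
    rintro _ ⟨h, hh, rfl⟩
    simp only [h.image_ball]
    by_cases hlt : dist x (h x) < e
    · exact Or.inl ((ball_eq_iff he).2 hlt)
    · have h1 : ρ ≤ dist x (h x) := by linarith [not_lt.1 hlt]
      have h2 : dist x (h x) = e := le_antisymm (hmax _ ⟨h, hh, h1, rfl⟩) (not_lt.1 hlt)
      obtain ⟨C, hC1, hC2⟩ := hC h hh h1
      rw [h2] at hC2
      refine Or.inr ⟨C, hC1, ?_⟩
      exact ((ball_eq_iff he).2 (by rw [dist_comm]; exact hC2 (hp C (hc C hC1).nonempty)))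
  · have := hsing g hg
    rw [g.image_ball, ball_eq_iff he, hge] at this
    exact lt_irrefl _ this

/-- If the orbit of `ball x d` under the stabilizer of `𝓑 ∪ 𝓒` is finite and some `g` in this
stabilizer moves `x` by exactly `d`, then the stabilizer of `𝓑` moves `x` by more than `d`. -/
lemma exists_far {𝓑 𝓒 : Set (Set X)} (hb : ∀ B ∈ 𝓑, IsBall B)
    (hc : ∀ C ∈ 𝓒, IsBall C) (hfin : 𝓒.Finite) (hext : ExtremalityProperty X 𝓑)
    {x : X} {d : ℝ} (hd : 0 < d) {g : X ≃ᵢ X} (hg : g ∈ tau (1 : X ≃ᵢ X) (𝓑 ∪ 𝓒))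
    (hgd : dist x (g x) = d) (horb : (orb (𝓑 ∪ 𝓒) (Metric.ball x d)).Finite) :
    ∃ h ∈ tau (1 : X ≃ᵢ X) 𝓑, d < dist x (h x) := by
  by_contra! hcon
  have : Nonempty X := ⟨x⟩
  obtain ⟨p, hp⟩ := exists_pick X
  rcases extremal_iff.1 (hext (Metric.ball x d) (isBall_ball x hd)) with hinf | hsing
  · refine hinf ((horb.union ((hfin.image fun C => Metric.ball (p C) d).insert
      (Metric.ball x d))).subset ?_)
    rintro _ ⟨h, hh, rfl⟩
    simp only [h.image_ball]
    by_cases hlt : dist x (h x) < d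
    · exact Or.inr (Or.inl ((ball_eq_iff hd).2 hlt))
    have hhd : dist x (h x) = d := le_antisymm (hcon h hh) (not_lt.1 hlt)
    by_cases hC : ∃ C ∈ 𝓒, C ⊆ Metric.ball (h x) d
    · obtain ⟨C, hC1, hC2⟩ := hC
      refine Or.inr (Or.inr ⟨C, hC1, ?_⟩)
      exact ((ball_eq_iff hd).2 (by rw [dist_comm]; exact hC2 (hp C (hc C hC1).nonempty)))
    · push Not at hC
      left
      obtain ⟨s, hsx, hs⟩ := exists_swap h x (hd.trans_eq hhd.symm)
      rw [hhd] at hs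
      refine ⟨s, ?_, by simp only [s.image_ball, hsx]⟩
      rw [mem_tau_one] at hg ⊢
      rintro B (hB | hB)
      · exact hs B (hb B hB) (not_subset_of_moved (hb B hB).nonempty (hg B (Or.inl hB)) hgd.ge)
          (not_subset_of_moved_image (hb B hB).nonempty (mem_tau_one.1 hh B hB) hhd.ge)
      · exact hs B (hc B hB) (not_subset_of_moved (hc B hB).nonempty (hg B (Or.inr hB)) hgd.ge)
          (hC B hB)
  · have := hsing g (mem_tau_union.1 hg).1
    rw [g.image_ball, ball_eq_iff hd, hgd] at this
    exact lt_irrefl _ this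

lemma extremalityProperty_union {𝓑 𝓒 : Set (Set X)} (hb : ∀ B ∈ 𝓑, IsBall B)
    (hc : ∀ C ∈ 𝓒, IsBall C) (hbfin : 𝓑.Finite) (hcfin : 𝓒.Finite)
    (hbext : ExtremalityProperty X 𝓑) (hcext : ExtremalityProperty X 𝓒) :
    ExtremalityProperty X (𝓑 ∪ 𝓒) := by
  rintro _ ⟨r, hr, x, rfl⟩
  rw [extremal_iff]
  by_contra! hcon
  obtain ⟨hfin, g₀, hg₀, hne⟩ := hcon
  have : Nonempty X := ⟨x⟩
  obtain ⟨p, hp⟩ := exists_pick X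
  rw [g₀.image_ball, ne_eq, ball_eq_iff hr, not_lt] at hne
  set D : Set ℝ :=
    {e | ∃ g ∈ tau (1 : X ≃ᵢ X) (𝓑 ∪ 𝓒), r ≤ dist x (g x) ∧ dist x (g x) = e} with hD
  have hDfin : D.Finite := by
    refine (hfin.image fun C => dist x (p C)).subset ?_
    rintro e ⟨g, hg, hd, rfl⟩
    refine ⟨_, ⟨g, hg, rfl⟩, ?_⟩
    simp only [g.image_ball]
    exact dist_eq_of_near (hp _ ⟨g x, Metric.mem_ball_self hr⟩) hd
  obtain ⟨d, ⟨g, hg, hrd, hgd⟩, hmax⟩ := Set.exists_max_image D id hDfin ⟨_, g₀, hg₀, hne, rfl⟩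
  have hrd' : r ≤ d := hgd ▸ hrd
  have hd : 0 < d := by linarith
  have hle : ∀ h ∈ tau (1 : X ≃ᵢ X) (𝓑 ∪ 𝓒), dist x (h x) ≤ d := by
    intro h hh
    by_cases hlt : dist x (h x) < r
    · linarith
    · exact hmax _ ⟨h, hh, not_lt.1 hlt, rfl⟩
  have horb : (orb (𝓑 ∪ 𝓒) (Metric.ball x d)).Finite := by
    refine (hfin.image fun S => Metric.ball (p S) d).subset ?_
    rintro _ ⟨h, hh, rfl⟩
    refine ⟨_, ⟨h, hh, rfl⟩, ?_⟩
    simp only [h.image_ball]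
    have : dist (p (Metric.ball (h x) r)) (h x) < r := hp _ ⟨h x, Metric.mem_ball_self hr⟩
    exact (ball_eq_iff hd).2 (by rw [dist_comm]; exact this.trans_le hrd')
  obtain ⟨h₁, hh₁, hd₁⟩ := exists_far hb hc hcfin hbext hd hg hgd horb
  obtain ⟨h₂, hh₂, hd₂⟩ := exists_far hc hb hbfin hcext hd (by rwa [Set.union_comm]) hgd
    (by rwa [Set.union_comm])
  obtain ⟨k₁, hk₁, C, hC, hCs⟩ := exists_moved_ball_containing hb hc hcfin hbext
    (hd.trans hd₁) (fun h hh => (hle h hh).trans_lt hd₁) ⟨h₁, hh₁, le_rfl⟩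
  obtain ⟨k₂, hk₂, B, hB, hBs⟩ := exists_moved_ball_containing hc hb hbfin hcext
    (hd.trans hd₂) (fun h hh => (hle h (by rwa [Set.union_comm])).trans_lt hd₂) ⟨h₂, hh₂, le_rfl⟩
  rcases le_total (dist x (k₁ x)) (dist x (k₂ x)) with hl | hl
  · exact not_subset_of_moved (hc C hC).nonempty (mem_tau_one.1 hk₂ C hC) le_rfl
      (hCs.trans (Metric.ball_subset_ball hl))
  · exact not_subset_of_moved (hb B hB).nonempty (mem_tau_one.1 hk₁ B hB) le_rfl
      (hBs.trans (Metric.ball_subset_ball hl))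

end UltraGen

open UltraGen in
theorem exists_invariant_extremal_strengthening
    {X : Type*} [MetricSpace X] [IsUltrametricDist X]
    (𝓑 : Set (Set X)) (h𝓑 : FDFamily 𝓑) (hext : ExtremalityProperty X 𝓑)
    (Z : Set X) (hZ : Z.Finite) (hZ𝓑 : ∀ B ∈ 𝓑, (Z ∩ B).Nonempty) :
    ∃ 𝓑' : Set (Set X), FDFamily 𝓑' ∧ Strengthens 𝓑' 𝓑 ∧ ExtremalityProperty X 𝓑' ∧
      ∀ g : X ≃ᵢ X, PermutesSet g Z → PermutesFam g 𝓑' := by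
  obtain ⟨hfin, hball, -⟩ := h𝓑
  -- `F` is the set of translated families and `A` its union.
  set F : Set (Set (Set X)) :=
    {𝓒 | ∃ h : X ≃ᵢ X, PermutesSet h Z ∧ 𝓒 = (fun B => h '' B) '' 𝓑} with hF
  set A : Set (Set X) := ⋃₀ F with hA
  have hAball : ∀ B ∈ A, IsBall B := by
    rintro _ ⟨_, ⟨h, hh, rfl⟩, B, hB, rfl⟩
    exact (hball B hB).image h
  have hAfin : A.Finite := by
    choose! r hr using hball
    refine (hZ.image2 (fun z B => Metric.ball z (r B)) hfin).subset ?_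
    rintro _ ⟨_, ⟨h, hh, rfl⟩, B, hB, rfl⟩
    obtain ⟨z, hz, hzB⟩ := hZ𝓑 B hB
    refine ⟨h z, ?_, B, hB, ?_⟩
    · rw [← show h '' Z = Z from hh]
      exact Set.mem_image_of_mem h hz
    · obtain ⟨-, x, hx⟩ := hr B hB
      have hzx : z ∈ Metric.ball x (r B) := hx ▸ hzB
      have : B = Metric.ball z (r B) := hx.trans (IsUltrametricDist.ball_eq_of_mem hzx)
      conv_rhs => simp only []; rw [this]
      exact (h.image_ball z (r B)).symm
  have hFfin : F.Finite :=
    hAfin.finite_subsets.subset fun 𝓒 h𝓒 => Set.subset_sUnion_of_mem h𝓒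
  have h𝓑F : 𝓑 ∈ F := ⟨1, by simp [PermutesSet], by simp⟩
  have h𝓑A : 𝓑 ⊆ A := Set.subset_sUnion_of_mem h𝓑F
  have hAext : ExtremalityProperty X A := by
    have key : ∀ S : Set (Set (Set X)), S.Finite → S ⊆ F → ExtremalityProperty X (𝓑 ∪ ⋃₀ S) := by
      intro S hS
      induction S, hS using Set.Finite.induction_on with
      | empty => intro _; simpa using hext
      | @insert 𝓒 S _ _ ih =>
        intro hsub
        have hSF : S ⊆ F := (Set.subset_insert _ _).trans hsub
        have h𝓒 : 𝓒 ∈ F := hsub (Set.mem_insert _ _)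
        have h1 : 𝓑 ∪ ⋃₀ S ⊆ A := Set.union_subset h𝓑A (Set.sUnion_subset_sUnion hSF)
        have h2 : 𝓒 ⊆ A := Set.subset_sUnion_of_mem h𝓒
        have h𝓒ext : ExtremalityProperty X 𝓒 := by
          obtain ⟨h, -, rfl⟩ := h𝓒
          exact extremalityProperty_image hext h
        have := extremalityProperty_union (fun B hB => hAball B (h1 hB))
          (fun B hB => hAball B (h2 hB)) (hAfin.subset h1) (hAfin.subset h2) (ih hSF) h𝓒ext
        rwa [Set.sUnion_insert, Set.union_comm 𝓒, ← Set.union_assoc]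
    have := key F hFfin subset_rfl
    rwa [Set.union_eq_self_of_subset_left h𝓑A] at this
  have hAinv : ∀ g : X ≃ᵢ X, PermutesSet g Z → ∀ B ∈ A, g '' B ∈ A := by
    rintro g hg _ ⟨_, ⟨h, hh, rfl⟩, B, hB, rfl⟩
    have hc : (⇑(g * h) : X → X) = g ∘ h := rfl
    refine ⟨_, ⟨g * h, ?_, rfl⟩, B, hB, ?_⟩
    · have hg' : g '' Z = Z := hg
      have hh' : h '' Z = Z := hh
      simp only [PermutesSet]
      rw [hc, Set.image_comp, hh', hg']
    · simp only [hc, Set.image_comp]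
  have htau : tau (1 : X ≃ᵢ X) {B | Minimal (· ∈ A) B} = tau (1 : X ≃ᵢ X) A := by
    ext g
    rw [mem_tau_one, mem_tau_one]
    refine ⟨fun h C hC => ?_, fun h B hB => h B hB.1⟩
    obtain ⟨B, hBC, hB⟩ := hAfin.exists_le_minimal hC
    exact image_eq_of_subset (hAball B hB.1).nonempty (h B hB) (hAball C hC) hBC
  have hminv : ∀ g : X ≃ᵢ X, PermutesSet g Z → ∀ B, Minimal (· ∈ A) B →
      Minimal (· ∈ A) (g '' B) := by
    intro g hg B hB
    have hg' : g '' Z = Z := hg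
    have hcomp : ∀ S : Set X, ⇑g⁻¹ '' (g '' S) = S := fun S => by
      rw [← Set.image_comp, show (⇑g⁻¹ ∘ ⇑g : X → X) = id by funext y; simp, Set.image_id]
    have hcomp' : ∀ S : Set X, g '' (⇑g⁻¹ '' S) = S := fun S => by
      rw [← Set.image_comp, show (⇑g ∘ ⇑g⁻¹ : X → X) = id by funext y; simp, Set.image_id]
    have hginv : PermutesSet g⁻¹ Z := by
      have := hcomp Z
      rwa [hg'] at this
    refine ⟨hAinv g hg B hB.1, fun C hC hCB => ?_⟩
    have h1 : ⇑g⁻¹ '' C ⊆ B := by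
      have := Set.image_mono (f := ⇑g⁻¹) hCB
      rwa [hcomp] at this
    have h2 : B ⊆ ⇑g⁻¹ '' C := hB.2 (hAinv _ hginv C hC) h1
    have h3 := Set.image_mono (f := ⇑g) h2
    rwa [hcomp'] at h3
  refine ⟨{B | Minimal (· ∈ A) B}, ⟨hAfin.subset fun B hB => hB.1, fun B hB => hAball B hB.1, ?_⟩,
    ?_, ?_, ?_⟩
  · intro B hB C hC hne
    rcases subset_or_disjoint (hAball B hB.1) (hAball C hC.1) with h | h | h
    · exact absurd (h.antisymm (hC.2 hB.1 h)) hne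
    · exact absurd ((hB.2 hC.1 h).antisymm h) hne
    · exact h
  · intro g hg
    rw [htau, mem_tau_one] at hg
    exact mem_tau_one.2 fun B hB => hg B (h𝓑A hB)
  · intro C hC
    have := hAext C hC
    simp only [Extremal, orb] at this ⊢
    rwa [htau]
  · intro g hg
    -- An injective self-map of a finite set is onto.
    have hsub : (fun B => g '' B) '' {B | Minimal (· ∈ A) B} ⊆ {B | Minimal (· ∈ A) B} := by
      rintro _ ⟨B, hB, rfl⟩
      exact hminv g hg B hB
    refine Set.eq_of_subset_of_ncard_le hsub ?_ (hAfin.subset fun B hB => hB.1)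
    rw [Set.ncard_image_of_injective _ (Set.image_injective.2 g.injective)]
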